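/- Let K ⊆ ℝ × ℝ be a nonempty compact set. Then K is a computable compact set if and only if both of the following hold: (i) there is a sequence (x_n) of points of K that is uniformly computable and dense in K, and (ii) the complement (ℝ × ℝ) \ K is a lower-computable open set. -/

import Mathlib

/-- The finite subset of `ℝ × ℝ` determined by a finite set of rational points. -/
def ratFinsetToSet (s : Finset (ℚ × ℚ)) : Set (ℝ × ℝ) :=
  (fun q : ℚ × ℚ => (((q.1 : ℝ), (q.2 : ℝ)) : ℝ × ℝ)) '' ↑s

/-- A function `f : ℕ → Finset (ℚ × ℚ)` is computable if it is given by a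
computable list-valued function (lists being a standard effective encoding of
finite sets). -/
def ComputableFinsetFun (f : ℕ → Finset (ℚ × ℚ)) : Prop :=
  ∃ g : ℕ → List (ℚ × ℚ), Computable g ∧ ∀ n, (g n).toFinset = f n

/-- A nonempty compact set `K ⊆ ℝ × ℝ` is computable if a computable function
produces, for each `n`, a nonempty finite set of rational points at Hausdorff
distance less than `2⁻ⁿ` from `K`. -/
def IsComputableCompactSet (K : Set (ℝ × ℝ)) : Prop :=
  ∃ f : ℕ → Finset (ℚ × ℚ), ComputableFinsetFun f ∧
    ∀ n : ℕ, (f n).Nonempty ∧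
      Metric.hausdorffDist K (ratFinsetToSet (f n)) < (2 : ℝ) ^ (-(n : ℤ))

/-- The point of `ℝ × ℝ` determined by a rational pair. -/
def ratPointToReal (q : ℚ × ℚ) : ℝ × ℝ := ((q.1 : ℝ), (q.2 : ℝ))

/-- A sequence of points of the plane is uniformly computable if a single
computable function produces `2⁻ᵐ`-approximations of each of its terms. -/
def UniformlyComputableSeq (x : ℕ → ℝ × ℝ) : Prop :=
  ∃ g : ℕ × ℕ → ℚ × ℚ, Computable g ∧
    ∀ n m : ℕ, dist (ratPointToReal (g (n, m))) (x n) < (2 : ℝ) ^ (-(m : ℤ))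

/-- An open subset of the plane is lower-computable if it is the union of a
computable sequence of rational balls. -/
def IsLowerComputableOpen (U : Set (ℝ × ℝ)) : Prop :=
  ∃ c : ℕ → ℚ × ℚ, ∃ r : ℕ → ℚ, Computable c ∧ Computable r ∧
    U = ⋃ n : ℕ, Metric.ball (ratPointToReal (c n)) (r n)

/-!
If `K` is computable, its approximations at scale `2⁻ⁿ` let one recognize the rational balls of
radius `2⁻ⁿ` whose centre is at distance at least `2 · 2⁻ⁿ` from the approximation; these balls
exhaust `Kᶜ`. Every point of an approximation is the start of a fast Cauchy sequence running through
the finer approximations, whose limit is a point of `K`, and these limits are dense.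

Conversely, for each `n` the balls of radius `2⁻ⁿ` around approximations of the `x k` cover `K`, so
together with the balls exhausting `Kᶜ` they cover a square containing `K`. A finite subcover can be
recognized: it is enough that, after shrinking the balls by the mesh of a grid, they still contain
the finitely many grid points. Hence it can be found by search, and the centres of those of
its balls that come from the sequence approximate `K`.
-/

open Encodable Set Filter Topology

/-! ### Primitive recursive arithmetic -/

theorem primrec_nat_count {p : ℕ → Prop} [DecidablePred p] (hp : PrimrecPred p) :
    Primrec (Nat.count p) := by
  have hstep : Primrec₂ fun n c : ℕ => if p n then c + 1 else c :=
    Primrec.ite (hp.comp Primrec.fst) (Primrec.succ.comp Primrec.snd) Primrec.snd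
  refine (Primrec.nat_rec₁ 0 hstep).of_eq fun n => ?_
  induction n with
  | zero => rfl
  | succ n ih => grind

theorem primrec_nat_gcd : Primrec₂ Nat.gcd := by
  have hdvd : PrimrecRel fun (x : ℕ × ℕ) d => x.1 % d = 0 ∧ x.2 % d = 0 :=
    (Primrec.eq.comp (Primrec.nat_mod.comp (Primrec.fst.comp Primrec.fst) Primrec.snd)
      (Primrec.const 0)).and
    (Primrec.eq.comp (Primrec.nat_mod.comp (Primrec.snd.comp Primrec.fst) Primrec.snd)
      (Primrec.const 0))
  refine (Primrec.nat_findGreatest Primrec.nat_add hdvd).of_eq fun ⟨m, n⟩ => ?_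
  simp only [← Nat.dvd_iff_mod_eq_zero, Nat.findGreatest_eq_iff]
  refine ⟨?_, fun _ => ⟨Nat.gcd_dvd_left m n, Nat.gcd_dvd_right m n⟩, fun d hlt hle hd => ?_⟩
  · rcases m.eq_zero_or_pos with rfl | hm
    · simp
    · exact (Nat.gcd_le_left n hm).trans (Nat.le_add_right m n)
  · have hpos : 0 < Nat.gcd m n := Nat.gcd_pos_iff.2 (by lia)
    exact hlt.not_ge (Nat.le_of_dvd hpos (Nat.dvd_gcd hd.1 hd.2))

theorem primrec_nat_pow (b : ℕ) : Primrec (b ^ ·) := by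
  refine (Primrec.nat_rec₁ 1 (Primrec.nat_mul.comp₂ Primrec₂.right (Primrec₂.const b))).of_eq
    fun n => ?_
  induction n with
  | zero => rfl
  | succ n ih => simp only [pow_succ, ← ih]

theorem primrec_intEquivNatSumNat : Primrec Equiv.intEquivNatSumNat :=
  Primrec.encode_iff.1 <| Primrec.encode.of_eq fun z => by cases z <;> rfl

theorem primrec_intEquivNatSumNat_symm : Primrec Equiv.intEquivNatSumNat.symm :=
  Primrec.encode_iff.1 <| Primrec.encode.of_eq fun z => by cases z <;> rfl

theorem primrec_int_toNat : Primrec Int.toNat :=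
  (Primrec.sumCasesOn primrec_intEquivNatSumNat Primrec₂.right (Primrec₂.const 0)).of_eq
    fun z => by cases z <;> rfl

theorem primrec_int_toNat_neg : Primrec fun z : ℤ => (-z).toNat :=
  (Primrec.sumCasesOn primrec_intEquivNatSumNat (Primrec₂.const 0)
    (Primrec.succ.comp₂ Primrec₂.right)).of_eq fun z => by
      cases z with
      | ofNat n => exact (Int.toNat_neg_natCast n).symm
      | negSucc n => rfl

theorem primrec_natCast_sub_natCast : Primrec₂ fun m n : ℕ => (m : ℤ) - n := by
  have hinl : Primrec₂ fun m n : ℕ => (Sum.inl (m - n) : ℕ ⊕ ℕ) :=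
    Primrec.sumInl.comp₂ Primrec.nat_sub
  have hinr : Primrec₂ fun m n : ℕ => (Sum.inr (n - m - 1) : ℕ ⊕ ℕ) :=
    Primrec.sumInr.comp₂ (Primrec.pred.comp₂ Primrec.nat_sub.swap)
  refine (primrec_intEquivNatSumNat_symm.comp
    (Primrec.ite (Primrec.nat_le.comp Primrec.snd Primrec.fst) hinl hinr)).of_eq fun ⟨m, n⟩ => ?_
  dsimp only
  split_ifs with h
  · exact Int.ofNat_sub h
  · change Int.negSucc (n - m - 1) = _
    lia

theorem primrec_int_natAbs : Primrec Int.natAbs :=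
  (Primrec.nat_add.comp primrec_int_toNat primrec_int_toNat_neg).of_eq fun z => by lia

theorem primrec_int_natCast : Primrec ((↑) : ℕ → ℤ) :=
  (primrec_natCast_sub_natCast.comp Primrec.id (Primrec.const 0)).of_eq fun n => by simp

theorem primrec_int_sub : Primrec₂ fun z w : ℤ => z - w := by
  have hpos : Primrec₂ fun z w : ℤ => z.toNat + (-w).toNat :=
    Primrec.nat_add.comp₂ (primrec_int_toNat.comp₂ .left) (primrec_int_toNat_neg.comp₂ .right)
  refine (primrec_natCast_sub_natCast.comp₂ hpos hpos.swap).of_eq fun z w => ?_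
  simp only [Function.swap]
  lia

theorem primrec_int_mul : Primrec₂ fun z w : ℤ => z * w := by
  have hpos : Primrec₂ fun z w : ℤ => z.toNat * w.toNat + (-z).toNat * (-w).toNat :=
    Primrec.nat_add.comp₂
      (Primrec.nat_mul.comp₂ (primrec_int_toNat.comp₂ .left) (primrec_int_toNat.comp₂ .right))
      (Primrec.nat_mul.comp₂ (primrec_int_toNat_neg.comp₂ .left)
        (primrec_int_toNat_neg.comp₂ .right))
  have hneg : Primrec₂ fun z w : ℤ => z.toNat * (-w).toNat + (-z).toNat * w.toNat :=
    Primrec.nat_add.comp₂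
      (Primrec.nat_mul.comp₂ (primrec_int_toNat.comp₂ .left) (primrec_int_toNat_neg.comp₂ .right))
      (Primrec.nat_mul.comp₂ (primrec_int_toNat_neg.comp₂ .left)
        (primrec_int_toNat.comp₂ .right))
  refine (primrec_natCast_sub_natCast.comp₂ hpos hneg).of_eq fun z w => ?_
  conv_rhs => rw [← Int.toNat_sub_toNat_neg z, ← Int.toNat_sub_toNat_neg w]
  push_cast
  ring

theorem primrecRel_int_lt : PrimrecRel fun z w : ℤ => z < w :=
  (Primrec.nat_lt.comp (Primrec.const 0)
    (primrec_int_toNat.comp (primrec_int_sub.comp Primrec.snd Primrec.fst))).of_eq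
    fun ⟨z, w⟩ => by lia

theorem primrec_int_tdiv_natCast : Primrec₂ fun (z : ℤ) (n : ℕ) => z.tdiv n := by
  refine (primrec_natCast_sub_natCast.comp₂
    (Primrec.nat_div.comp₂ (primrec_int_toNat.comp₂ .left) .right)
    (Primrec.nat_div.comp₂ (primrec_int_toNat_neg.comp₂ .left) .right)).of_eq fun z n => ?_
  obtain ⟨k, rfl | rfl⟩ := z.eq_nat_or_neg <;> simp [Int.neg_tdiv]

/-- The number coding a rational through its numerator and denominator. Mathlib's code of `q`, the
one computability over `ℚ` refers to, is the rank of `ratCode q` among all such numbers. -/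
def ratCode (q : ℚ) : ℕ := Nat.pair (encode q.num) q.den

theorem mem_range_ratCode_iff {c : ℕ} :
    c ∈ range ratCode ↔
      0 < c.unpair.2 ∧ (Denumerable.ofNat ℤ c.unpair.1).natAbs.gcd c.unpair.2 = 1 := by
  constructor
  · rintro ⟨q, rfl⟩
    rw [ratCode, Nat.unpair_pair, Denumerable.ofNat_encode]
    exact ⟨q.pos, q.reduced⟩
  · rintro ⟨hpos, hcoprime⟩
    refine ⟨⟨Denumerable.ofNat ℤ c.unpair.1, c.unpair.2, hpos.ne', hcoprime⟩, ?_⟩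
    rw [ratCode, Denumerable.encode_ofNat, Nat.pair_unpair]

theorem primrecPred_mem_range_ratCode : PrimrecPred (· ∈ range ratCode) := by
  have hden : Primrec fun c : ℕ => c.unpair.2 := Primrec.snd.comp Primrec.unpair
  have hnum : Primrec fun c : ℕ => Denumerable.ofNat ℤ c.unpair.1 :=
    (Primrec.ofNat ℤ).comp (Primrec.fst.comp Primrec.unpair)
  exact ((Primrec.nat_lt.comp (Primrec.const 0) hden).and
    (Primrec.eq.comp (primrec_nat_gcd.comp (primrec_int_natAbs.comp hnum) hden)
      (Primrec.const 1))).of_eq fun c => mem_range_ratCode_iff.symm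

open Classical in
theorem encode_rat_eq_count (q : ℚ) :
    @encode ℚ Primcodable.toEncodable q = Nat.count (· ∈ range ratCode) (ratCode q) := by
  have hrank : @encode ℚ Primcodable.toEncodable q = (List.range (ratCode q)).countP
      fun n => @decide (n ∈ range (@encode ℚ Rat.instEncodable))
        (decidableRangeEncode ℚ n) := rfl
  rw [hrank, Nat.count_eq_card_filter_range, List.countP_eq_length_filter]
  change _ = ((List.range (ratCode q)).filter fun n => decide (n ∈ range ratCode)).length
  congr 1
  refine List.filter_congr fun n _ => ?_
  rw [decide_eq_decide]
  rfl

open Classical in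
theorem ratCode_eq_iff {q : ℚ} {c : ℕ} :
    ratCode q = c ↔
      c ∈ range ratCode ∧
        Nat.count (· ∈ range ratCode) c = @encode ℚ Primcodable.toEncodable q := by
  rw [encode_rat_eq_count]
  constructor
  · rintro rfl
    exact ⟨mem_range_self q, rfl⟩
  · rintro ⟨hc, hcount⟩
    exact Nat.count_injective (mem_range_self q) hc hcount.symm

theorem ratCode_intCast (z : ℤ) : ratCode z = Nat.pair (encode z) 1 := rfl

open Classical in
theorem ratCode_le (q : ℚ) : ratCode q ≤ Nat.pair (@encode ℚ Primcodable.toEncodable q) 1 := by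
  -- The codes of the integers alone show that at least `j` codes lie below `Nat.pair j 1`.
  set p : ℕ → Prop := (· ∈ range ratCode)
  have hp (j : ℕ) : p (Nat.pair j 1) :=
    ⟨(Denumerable.ofNat ℤ j : ℤ), by rw [ratCode_intCast, Denumerable.encode_ofNat]⟩
  have hmono : StrictMono fun j => Nat.count p (Nat.pair j 1) := fun i j hij =>
    Nat.count_strict_mono (hp i) (Nat.pair_lt_pair_left 1 hij)
  by_contra! hlt
  have hle := hmono.le_apply (x := @encode ℚ Primcodable.toEncodable q)
  have hlt' := Nat.count_strict_mono (hp _) hlt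
  rw [← encode_rat_eq_count] at hlt'
  exact hle.not_gt hlt'

theorem primrec_ratCode : Primrec ratCode := by
  classical
  refine Primrec.of_graph ⟨fun q => Nat.pair (@encode ℚ Primcodable.toEncodable q) 1,
    Primrec₂.natPair.comp Primrec.encode (Primrec.const 1), ratCode_le⟩ ?_
  exact ((primrecPred_mem_range_ratCode.comp Primrec.snd).and (Primrec.eq.comp
    ((primrec_nat_count primrecPred_mem_range_ratCode).comp Primrec.snd)
    (Primrec.encode.comp Primrec.fst))).of_eq fun _ => ratCode_eq_iff.symm

theorem primrec_rat_num : Primrec Rat.num :=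
  ((Primrec.ofNat ℤ).comp (Primrec.fst.comp (Primrec.unpair.comp primrec_ratCode))).of_eq
    fun q => by rw [ratCode, Nat.unpair_pair, Denumerable.ofNat_encode]

theorem primrec_rat_den : Primrec Rat.den :=
  (Primrec.snd.comp (Primrec.unpair.comp primrec_ratCode)).of_eq
    fun q => by rw [ratCode, Nat.unpair_pair]

theorem primrec_rat_of_num_den {α : Type*} [Primcodable α] {f : α → ℚ}
    (hnum : Primrec fun a => (f a).num) (hden : Primrec fun a => (f a).den) : Primrec f := by
  classical
  have hcode : Primrec fun a => ratCode (f a) :=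
    Primrec₂.natPair.comp (Primrec.encode.comp hnum) hden
  exact Primrec.encode_iff.1 <|
    ((primrec_nat_count primrecPred_mem_range_ratCode).comp hcode).of_eq
      fun a => (encode_rat_eq_count (f a)).symm

theorem primrec_mkRat : Primrec₂ mkRat := by
  have hgcd : Primrec₂ fun (z : ℤ) (n : ℕ) => n.gcd z.natAbs :=
    primrec_nat_gcd.comp₂ .right (primrec_int_natAbs.comp₂ .left)
  have hzero : PrimrecPred fun x : ℤ × ℕ => x.2 = 0 := Primrec.eq.comp Primrec.snd (Primrec.const 0)
  refine primrec_rat_of_num_den ?_ ?_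
  · refine (Primrec.ite hzero (Primrec.const 0)
      (primrec_int_tdiv_natCast.comp Primrec.fst hgcd)).of_eq fun ⟨z, n⟩ => ?_
    rw [Rat.num_mkRat, Int.tdiv_eq_ediv_of_dvd (Int.natCast_dvd.2 (Nat.gcd_dvd_right n _))]
  · exact (Primrec.ite hzero (Primrec.const 1)
      (Primrec.nat_div.comp Primrec.snd hgcd)).of_eq fun ⟨z, n⟩ => (Rat.den_mkRat z n).symm

theorem primrec_rat_num_mul_den : Primrec₂ fun q r : ℚ => q.num * r.den :=
  primrec_int_mul.comp₂ (primrec_rat_num.comp₂ .left)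
    ((primrec_int_natCast.comp primrec_rat_den).comp₂ .right)

theorem primrec_rat_sub : Primrec₂ fun q r : ℚ => q - r :=
  (primrec_mkRat.comp₂
    (primrec_int_sub.comp₂ primrec_rat_num_mul_den primrec_rat_num_mul_den.swap)
    (Primrec.nat_mul.comp₂ (primrec_rat_den.comp₂ .left) (primrec_rat_den.comp₂ .right))).of_eq
    fun q r => (Rat.sub_def' q r).symm

theorem primrecRel_rat_lt : PrimrecRel fun q r : ℚ => q < r :=
  (primrecRel_int_lt.comp primrec_rat_num_mul_den primrec_rat_num_mul_den.swap).of_eq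
    fun ⟨q, r⟩ => (Rat.lt_iff q r).symm

theorem primrec_rat_div_two_pow (q : ℚ) : Primrec fun n : ℕ => q / 2 ^ n :=
  (primrec_mkRat.comp (Primrec.const q.num)
    (Primrec.nat_mul.comp (Primrec.const q.den) (primrec_nat_pow 2))).of_eq fun n => by
      rw [Rat.mkRat_eq_div]
      push_cast
      rw [← div_div, Rat.num_div_den]

/-! ### Rational balls -/

section ComputabilityTools

variable {α β σ : Type*} [Primcodable α] [Primcodable β] [Primcodable σ]

theorem computablePred_of_primrecRel {R : β → σ → Prop} (hR : PrimrecRel R) {f : α → β} {g : α → σ}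
    (hf : Computable f) (hg : Computable g) : ComputablePred fun a => R (f a) (g a) := by
  classical
  exact ⟨inferInstance, hR.decide.to_comp.comp hf hg⟩

theorem computable_list_map_range {f : α → ℕ} {g : α → ℕ → σ} (hf : Computable f)
    (hg : Computable₂ g) : Computable fun a => (List.range (f a)).map (g a) := by
  have hstep : Computable₂ fun (a : α) (x : ℕ × List σ) => x.2 ++ [g a x.1] :=
    Computable.list_concat.comp (Computable.snd.comp Computable.snd)
      (hg.comp Computable.fst (Computable.fst.comp Computable.snd))
  refine (Computable.nat_rec hf (Computable.const []) hstep).of_eq fun a => ?_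
  induction f a with
  | zero => rfl
  | succ n ih => rw [List.range_succ, List.map_append, ← ih]; rfl

end ComputabilityTools

/-- The open ball of the plane with rational centre `b.1` and rational radius `b.2`. -/
def ratBall (b : (ℚ × ℚ) × ℚ) : Set (ℝ × ℝ) := Metric.ball (ratPointToReal b.1) b.2

theorem mem_ratBall {b : (ℚ × ℚ) × ℚ} {x : ℝ × ℝ} :
    x ∈ ratBall b ↔ dist x (ratPointToReal b.1) < b.2 := Iff.rfl

theorem denseRange_ratPointToReal : DenseRange ratPointToReal :=
  Rat.denseRange_cast.prodMap Rat.denseRange_cast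

theorem ratPointToReal_mem_ratBall_iff {p : ℚ × ℚ} {b : (ℚ × ℚ) × ℚ} :
    ratPointToReal p ∈ ratBall b ↔
      (p.1 - b.1.1 < b.2 ∧ b.1.1 - p.1 < b.2) ∧ p.2 - b.1.2 < b.2 ∧ b.1.2 - p.2 < b.2 := by
  simp only [mem_ratBall, ratPointToReal, Prod.dist_eq, max_lt_iff, Real.dist_eq, abs_sub_lt_iff]
  norm_cast

theorem primrecRel_ratPointToReal_mem_ratBall :
    PrimrecRel fun (p : ℚ × ℚ) (b : (ℚ × ℚ) × ℚ) => ratPointToReal p ∈ ratBall b := by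
  have hradius : Primrec fun x : (ℚ × ℚ) × (ℚ × ℚ) × ℚ => x.2.2 := Primrec.snd.comp Primrec.snd
  have hcoord {π : ℚ × ℚ → ℚ} (hπ : Primrec π) :
      PrimrecPred fun x : (ℚ × ℚ) × (ℚ × ℚ) × ℚ =>
        π x.1 - π x.2.1 < x.2.2 ∧ π x.2.1 - π x.1 < x.2.2 :=
    have hpoint := hπ.comp Primrec.fst
    have hcentre := hπ.comp (Primrec.fst.comp Primrec.snd)
    (primrecRel_rat_lt.comp (primrec_rat_sub.comp hpoint hcentre) hradius).and
      (primrecRel_rat_lt.comp (primrec_rat_sub.comp hcentre hpoint) hradius)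
  exact ((hcoord Primrec.fst).and (hcoord Primrec.snd)).of_eq
    fun _ => ratPointToReal_mem_ratBall_iff.symm

theorem isLowerComputableOpen_biUnion {β : Type*} [Primcodable β] {P : β → Prop}
    (hP : ComputablePred P) {b : β → (ℚ × ℚ) × ℚ} (hb : Computable b) :
    IsLowerComputableOpen (⋃ (z) (_ : P z), ratBall (b z)) := by
  obtain ⟨hdec, hP⟩ := hP
  -- Numbers that do not code an element of `P` contribute the empty ball of radius `0`.
  let ball (n : ℕ) : (ℚ × ℚ) × ℚ :=
    ((decode (α := β) n).map fun z => if P z then b z else (0, 0)).getD (0, 0)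
  have hball : Computable ball := by
    have hite : Computable fun z => if P z then b z else (0, 0) :=
      (Computable.cond hP hb (Computable.const (0, 0))).of_eq fun z => by
        by_cases hz : P z <;> simp [hz]
    exact Computable.option_getD
      (Computable.option_map Computable.decode (hite.comp Computable.snd).to₂)
      (Computable.const (0, 0))
  refine ⟨fun n => (ball n).1, fun n => (ball n).2, Computable.fst.comp hball,
    Computable.snd.comp hball, Subset.antisymm ?_ ?_⟩
  · refine iUnion₂_subset fun z hz => subset_iUnion_of_subset (encode z) ?_
    simp only [ball, encodek, Option.map_some, Option.getD_some, if_pos hz, ratBall, subset_refl]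
  · refine iUnion_subset fun n x hx => ?_
    cases hz : decode (α := β) n with
    | none => simp [ball, hz] at hx
    | some z =>
      by_cases hPz : P z
      · exact mem_iUnion₂.2 ⟨z, hPz, by simpa [ball, hz, hPz, mem_ratBall] using hx⟩
      · simp [ball, hz, hPz] at hx

/-! ### Effective compactness of squares -/

theorem exists_subset_iUnion_shrunk_ball {X : Type*} [PseudoMetricSpace X] {C : Set X}
    (hC : IsCompact C) {c : ℕ → X} {r ε : ℕ → ℝ} (hε : Antitone ε) (hε₀ : Tendsto ε atTop (𝓝 0))
    (hcover : C ⊆ ⋃ k, Metric.ball (c k) (r k)) :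
    ∃ m, C ⊆ ⋃ k < m, Metric.ball (c k) (r k - ε m) := by
  have hmono : Monotone fun m => ⋃ k < m, Metric.ball (c k) (r k - ε m) := fun m n hmn =>
    iUnion₂_subset fun k hk =>
      (Metric.ball_subset_ball (sub_le_sub_left (hε hmn) _)).trans
        (subset_iUnion₂_of_subset k (hk.trans_le hmn) Subset.rfl)
  refine hC.elim_directed_cover _ (fun m => isOpen_biUnion fun k _ => Metric.isOpen_ball)
    (fun x hx => ?_) hmono.directed_le
  obtain ⟨k, hk⟩ := mem_iUnion.1 (hcover hx)
  obtain ⟨m, hm, hkm⟩ :=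
    ((hε₀.eventually_lt_const (sub_pos.2 hk)).and (eventually_gt_atTop k)).exists
  exact mem_iUnion.2 ⟨m, mem_iUnion₂.2 ⟨k, hkm, lt_sub_comm.1 hm⟩⟩

/-- The multiples of `2⁻ᵐ` in the interval `[-R, R]`. -/
def dyadicPoints (R m : ℕ) : List ℚ :=
  (List.range (2 * (R * 2 ^ m) + 1)).map fun i : ℕ => mkRat (i - (R * 2 ^ m : ℕ)) (2 ^ m)

theorem abs_le_of_mem_dyadicPoints {R m : ℕ} {q : ℚ} (hq : q ∈ dyadicPoints R m) : |q| ≤ R := by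
  obtain ⟨i, hi, rfl⟩ := List.mem_map.1 hq
  have hi' : (i : ℚ) ≤ 2 * (R * 2 ^ m) := mod_cast Nat.lt_succ_iff.1 (List.mem_range.1 hi)
  rw [Rat.mkRat_eq_div, abs_le]
  push_cast
  rw [div_le_iff₀ (by positivity), le_div_iff₀ (by positivity)]
  constructor <;> linarith [Nat.cast_nonneg (α := ℚ) i]

theorem exists_mem_dyadicPoints_abs_sub_le {R : ℕ} (m : ℕ) {x : ℝ} (hx : |x| ≤ R) :
    ∃ q ∈ dyadicPoints R m, |x - q| ≤ 1 / 2 ^ m := by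
  obtain ⟨hlower, hupper⟩ := abs_le.1 hx
  have hpow : (0 : ℝ) < 2 ^ m := by positivity
  set N : ℕ := R * 2 ^ m
  have hN : (N : ℝ) = R * 2 ^ m := by simp [N]
  set y : ℝ := x * 2 ^ m + N
  have hy₀ : 0 ≤ y := by simp only [y, hN]; nlinarith
  have hy : y ≤ (2 * N : ℕ) := by push_cast; simp only [y, hN]; nlinarith
  refine ⟨mkRat (⌊y⌋₊ - N) (2 ^ m), List.mem_map_of_mem (f := fun i : ℕ => mkRat (i - N) (2 ^ m))
    (List.mem_range.2 (Nat.lt_succ_of_le (Nat.floor_le_of_le hy))), ?_⟩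
  have hsub : x - (mkRat (⌊y⌋₊ - N) (2 ^ m) : ℚ) = (y - ⌊y⌋₊) / 2 ^ m := by
    rw [Rat.mkRat_eq_div]
    push_cast
    field_simp
    simp only [y]
    ring
  rw [hsub, abs_div, abs_of_pos hpow]
  gcongr
  rw [abs_le]
  constructor <;> linarith [Nat.floor_le hy₀, Nat.lt_floor_add_one y]

theorem primrec_dyadicPoints (R : ℕ) : Primrec (dyadicPoints R) := by
  have hpow : Primrec fun m : ℕ => 2 ^ m := primrec_nat_pow 2
  have hbound : Primrec fun m : ℕ => R * 2 ^ m := Primrec.nat_mul.comp (Primrec.const R) hpow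
  refine Primrec.list_map (Primrec.list_range.comp
    (Primrec.succ.comp (Primrec.nat_mul.comp (Primrec.const 2) hbound))) ?_
  exact primrec_mkRat.comp
    (primrec_natCast_sub_natCast.comp Primrec.snd (hbound.comp Primrec.fst)) (hpow.comp Primrec.fst)

theorem primrec_list_product {α β : Type*} [Primcodable α] [Primcodable β] :
    Primrec₂ fun (l : List α) (l' : List β) => l ×ˢ l' :=
  Primrec.list_flatMap Primrec.fst <| Primrec.list_map (Primrec.snd.comp Primrec.fst) <|
    Primrec₂.pair.comp (Primrec.snd.comp Primrec.fst) Primrec.snd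

/-- The points of the square `[-R, R] × [-R, R]` whose coordinates are multiples of `2⁻ᵐ`. -/
def dyadicGrid (R m : ℕ) : List (ℚ × ℚ) := dyadicPoints R m ×ˢ dyadicPoints R m

theorem primrec_dyadicGrid (R : ℕ) : Primrec (dyadicGrid R) :=
  primrec_list_product.comp (primrec_dyadicPoints R) (primrec_dyadicPoints R)

theorem ratPointToReal_mem_closedBall_of_mem_dyadicGrid {R m : ℕ} {p : ℚ × ℚ}
    (hp : p ∈ dyadicGrid R m) : ratPointToReal p ∈ Metric.closedBall (0 : ℝ × ℝ) R := by
  obtain ⟨h₁, h₂⟩ := List.mem_product.1 hp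
  have hcoord {q : ℚ} (hq : q ∈ dyadicPoints R m) : ‖(q : ℝ)‖ ≤ R := by
    rw [Real.norm_eq_abs]
    exact_mod_cast abs_le_of_mem_dyadicPoints hq
  exact mem_closedBall_zero_iff.2 (max_le (hcoord h₁) (hcoord h₂))

theorem exists_mem_dyadicGrid_dist_le {R : ℕ} (m : ℕ) {x : ℝ × ℝ}
    (hx : x ∈ Metric.closedBall (0 : ℝ × ℝ) R) :
    ∃ p ∈ dyadicGrid R m, dist x (ratPointToReal p) ≤ 1 / 2 ^ m := by
  rw [mem_closedBall_zero_iff] at hx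
  obtain ⟨q₁, hq₁, h₁⟩ := exists_mem_dyadicPoints_abs_sub_le m ((norm_fst_le x).trans hx)
  obtain ⟨q₂, hq₂, h₂⟩ := exists_mem_dyadicPoints_abs_sub_le m ((norm_snd_le x).trans hx)
  exact ⟨(q₁, q₂), List.mem_product.2 ⟨hq₁, hq₂⟩, max_le h₁ h₂⟩

section EffectiveCompactness

/-- The ball `b` with its radius decreased by `2⁻ᵐ`. -/
def shrinkBall (m : ℕ) (b : (ℚ × ℚ) × ℚ) : (ℚ × ℚ) × ℚ := (b.1, b.2 - 1 / 2 ^ m)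

theorem mem_ratBall_shrinkBall {m : ℕ} {b : (ℚ × ℚ) × ℚ} {x : ℝ × ℝ} :
    x ∈ ratBall (shrinkBall m b) ↔ dist x (ratPointToReal b.1) < b.2 - 1 / 2 ^ m := by
  simp [shrinkBall, mem_ratBall]

theorem primrec_shrinkBall : Primrec₂ shrinkBall :=
  Primrec.pair (Primrec.fst.comp Primrec.snd) (primrec_rat_sub.comp (Primrec.snd.comp Primrec.snd)
    ((primrec_rat_div_two_pow 1).comp Primrec.fst))

/-- A decidable certificate that the first `m` of the balls `b k` cover `[-R, R] × [-R, R]`: after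
being shrunk by the mesh `2⁻ᵐ`, they still cover every point of the grid. -/
def IsGridCover (R : ℕ) (b : ℕ → (ℚ × ℚ) × ℚ) (m : ℕ) : Prop :=
  ∀ p ∈ dyadicGrid R m,
    ∃ c ∈ (List.range m).map fun k => shrinkBall m (b k), ratPointToReal p ∈ ratBall c

theorem IsGridCover.closedBall_subset {R m : ℕ} {b : ℕ → (ℚ × ℚ) × ℚ} (h : IsGridCover R b m) :
    Metric.closedBall (0 : ℝ × ℝ) R ⊆ ⋃ k < m, ratBall (b k) := fun x hx => by
  obtain ⟨p, hp, hxp⟩ := exists_mem_dyadicGrid_dist_le m hx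
  obtain ⟨c, hc, hpc⟩ := h p hp
  obtain ⟨k, hk, rfl⟩ := List.mem_map.1 hc
  rw [mem_ratBall_shrinkBall] at hpc
  exact mem_iUnion₂.2 ⟨k, List.mem_range.1 hk, mem_ratBall.2 <| by
    linarith [dist_triangle x (ratPointToReal p) (ratPointToReal (b k).1)]⟩

theorem exists_isGridCover {R : ℕ} {b : ℕ → (ℚ × ℚ) × ℚ}
    (hcover : Metric.closedBall (0 : ℝ × ℝ) R ⊆ ⋃ k, ratBall (b k)) : ∃ m, IsGridCover R b m := by
  have hanti : Antitone fun m : ℕ => (1 / 2 : ℝ) ^ m := pow_right_anti₀ (by norm_num) (by norm_num)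
  have hzero : Tendsto (fun m : ℕ => (1 / 2 : ℝ) ^ m) atTop (𝓝 0) :=
    tendsto_pow_atTop_nhds_zero_of_lt_one (by norm_num) (by norm_num)
  obtain ⟨m, hm⟩ := exists_subset_iUnion_shrunk_ball (isCompact_closedBall (0 : ℝ × ℝ) R)
    hanti hzero hcover
  refine ⟨m, fun p hp => ?_⟩
  obtain ⟨k, hk, hpk⟩ := mem_iUnion₂.1 (hm (ratPointToReal_mem_closedBall_of_mem_dyadicGrid hp))
  refine ⟨_, List.mem_map_of_mem (List.mem_range.2 hk), mem_ratBall_shrinkBall.2 ?_⟩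
  simpa only [one_div_pow] using Metric.mem_ball.1 hpk

variable {α : Type*} [Primcodable α] {b : α → ℕ → (ℚ × ℚ) × ℚ}

theorem computablePred_isGridCover (hb : Computable₂ b) (R : ℕ) :
    ComputablePred fun x : α × ℕ => IsGridCover R (b x.1) x.2 := by
  have hshrunk : Computable₂ fun (x : α × ℕ) k => shrinkBall x.2 (b x.1 k) :=
    primrec_shrinkBall.to_comp.comp (Computable.snd.comp Computable.fst)
      (hb.comp (Computable.fst.comp Computable.fst) Computable.snd)
  exact computablePred_of_primrecRel
    (PrimrecRel.forall_mem_list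
      (PrimrecRel.exists_mem_list primrecRel_ratPointToReal_mem_ratBall.swap).swap)
    ((primrec_dyadicGrid R).to_comp.comp Computable.snd)
    (computable_list_map_range Computable.snd hshrunk)

theorem exists_computable_finite_subcover_closedBall (hb : Computable₂ b) (R : ℕ)
    (hcover : ∀ a, Metric.closedBall (0 : ℝ × ℝ) R ⊆ ⋃ k, ratBall (b a k)) :
    ∃ f : α → ℕ, Computable f ∧
      ∀ a, Metric.closedBall (0 : ℝ × ℝ) R ⊆ ⋃ k < f a, ratBall (b a k) := by
  classical
  have hexists (a : α) : ∃ m, IsGridCover R (b a) m := exists_isGridCover (hcover a)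
  exact ⟨fun a => Nat.find (hexists a), Computable.find (computablePred_isGridCover hb R) hexists,
    fun a => (Nat.find_spec (hexists a)).closedBall_subset⟩

theorem exists_computable_finite_subcover {K : Set (ℝ × ℝ)} (hK : Bornology.IsBounded K)
    (hKc : IsLowerComputableOpen Kᶜ) (hb : Computable₂ b) (hcover : ∀ a, K ⊆ ⋃ k, ratBall (b a k)) :
    ∃ f : α → ℕ, Computable f ∧ ∀ a, K ⊆ ⋃ k < f a, ratBall (b a k) := by
  obtain ⟨c, r, hc, hr, hcr⟩ := hKc
  obtain ⟨R₀, hR₀⟩ := hK.subset_closedBall 0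
  obtain ⟨R, hR⟩ := exists_nat_ge R₀
  -- Alternate the given balls with those exhausting `Kᶜ`, so as to cover the whole square.
  let e (a : α) (k : ℕ) : (ℚ × ℚ) × ℚ := bif k.bodd then (c k.div2, r k.div2) else b a k.div2
  have he : Computable₂ e := by
    have hdiv2 : Computable fun x : α × ℕ => x.2.div2 :=
      Primrec.nat_div2.to_comp.comp Computable.snd
    exact Computable.cond (Primrec.nat_bodd.to_comp.comp Computable.snd)
      (Computable.pair (hc.comp hdiv2) (hr.comp hdiv2)) (hb.comp Computable.fst hdiv2)
  have hcover_e (a : α) : Metric.closedBall (0 : ℝ × ℝ) R ⊆ ⋃ k, ratBall (e a k) := fun x _ => by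
    by_cases hx : x ∈ K
    · obtain ⟨k, hk⟩ := mem_iUnion.1 (hcover a hx)
      exact mem_iUnion.2 ⟨2 * k, by simpa [e] using hk⟩
    · obtain ⟨k, hk⟩ := mem_iUnion.1 (hcr.subset hx)
      exact mem_iUnion.2 ⟨2 * k + 1, by simpa [e, ratBall] using hk⟩
  obtain ⟨f, hf, hfe⟩ := exists_computable_finite_subcover_closedBall he R hcover_e
  refine ⟨f, hf, fun a x hx => ?_⟩
  obtain ⟨k, hk, hxk⟩ := mem_iUnion₂.1
    (hfe a (Metric.closedBall_subset_closedBall hR (hR₀ hx)))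
  cases hodd : k.bodd with
  | true =>
    have hxKc : x ∈ Kᶜ := hcr.superset <| mem_iUnion.2
      ⟨k.div2, by simpa [e, hodd, ratBall] using hxk⟩
    exact absurd hx hxKc
  | false =>
    have hlt : k.div2 < f a := (k.div2_val ▸ Nat.div_le_self k 2).trans_lt hk
    exact mem_iUnion₂.2 ⟨k.div2, hlt, by simpa [e, hodd] using hxk⟩

end EffectiveCompactness

/-! ### Dyadic nets -/

theorem two_zpow_neg (n : ℕ) : (2 : ℝ) ^ (-(n : ℤ)) = 1 / 2 ^ n := by
  rw [zpow_neg, zpow_natCast, one_div]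

theorem exists_one_div_two_pow_lt {ε : ℝ} (hε : 0 < ε) : ∃ n : ℕ, 1 / 2 ^ n < ε := by
  simpa only [one_div_pow] using exists_pow_lt_of_lt_one hε (by norm_num : (1 / 2 : ℝ) < 1)

/-- The finite sets of rational points listed by `L n` approximate `K` up to `2⁻ⁿ` in both
directions, pointwise: a list-valued form of the Hausdorff distance bounds defining computable
compact sets. -/
structure IsDyadicNet (K : Set (ℝ × ℝ)) (L : ℕ → List (ℚ × ℚ)) : Prop where
  exists_mem_list : ∀ n, ∀ x ∈ K, ∃ q ∈ L n, dist x (ratPointToReal q) < 1 / 2 ^ n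
  exists_mem_set : ∀ n, ∀ q ∈ L n, ∃ x ∈ K, dist x (ratPointToReal q) < 1 / 2 ^ n

section Nets

variable {K : Set (ℝ × ℝ)} {L : ℕ → List (ℚ × ℚ)}

theorem ratFinsetToSet_toFinset (l : List (ℚ × ℚ)) :
    ratFinsetToSet l.toFinset = ratPointToReal '' {q | q ∈ l} := by
  rw [ratFinsetToSet, List.coe_toFinset]
  rfl

theorem IsComputableCompactSet.exists_isDyadicNet (h : IsComputableCompactSet K)
    (hK : Bornology.IsBounded K) (hne : K.Nonempty) :
    ∃ L, Computable L ∧ IsDyadicNet K L := by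
  obtain ⟨f, ⟨L, hL, hLf⟩, hf⟩ := h
  simp only [two_zpow_neg] at hf
  have hfin (n : ℕ) : Metric.hausdorffEDist K (ratFinsetToSet (f n)) ≠ ⊤ :=
    Metric.hausdorffEDist_ne_top_of_nonempty_of_bounded hne ((hf n).1.to_set.image _) hK
      ((f n).finite_toSet.image _).isBounded
  refine ⟨L, hL, fun n x hx => ?_, fun n q hq => ?_⟩
  · obtain ⟨_, hy, hxy⟩ := Metric.exists_dist_lt_of_hausdorffDist_lt hx (hf n).2 (hfin n)
    rw [← hLf n, ratFinsetToSet_toFinset] at hy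
    obtain ⟨q, hq, rfl⟩ := hy
    exact ⟨q, hq, hxy⟩
  · have hqf : ratPointToReal q ∈ ratFinsetToSet (f n) := by
      rw [← hLf n, ratFinsetToSet_toFinset]
      exact mem_image_of_mem _ hq
    exact Metric.exists_dist_lt_of_hausdorffDist_lt' hqf (hf n).2 (hfin n)

theorem IsDyadicNet.isComputableCompactSet (h : IsDyadicNet K L) (hL : Computable L)
    (hne : K.Nonempty) : IsComputableCompactSet K := by
  have hsucc : Computable fun n => L (n + 1) := hL.comp Computable.succ
  refine ⟨fun n => (L (n + 1)).toFinset, ⟨_, hsucc, fun _ => rfl⟩, fun n => ⟨?_, ?_⟩⟩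
  · obtain ⟨x, hx⟩ := hne
    obtain ⟨q, hq, -⟩ := h.exists_mem_list (n + 1) x hx
    exact ⟨q, List.mem_toFinset.2 hq⟩
  · rw [two_zpow_neg, ratFinsetToSet_toFinset]
    refine (Metric.hausdorffDist_le_of_mem_dist (r := 1 / 2 ^ (n + 1)) (by positivity)
      (fun x hx => ?_) ?_).trans_lt ?_
    · obtain ⟨q, hq, hxq⟩ := h.exists_mem_list (n + 1) x hx
      exact ⟨_, mem_image_of_mem _ hq, hxq.le⟩
    · rintro _ ⟨q, hq, rfl⟩
      obtain ⟨x, hx, hxq⟩ := h.exists_mem_set (n + 1) q hq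
      exact ⟨x, hx, by simpa only [dist_comm] using hxq.le⟩
    · exact one_div_pow_lt_one_div_pow_of_lt one_lt_two n.lt_succ_self

theorem exists_isDyadicNet_of_dense_seq (hK : Bornology.IsBounded K)
    (hKc : IsLowerComputableOpen Kᶜ) {x : ℕ → ℝ × ℝ} (hxK : ∀ k, x k ∈ K)
    (hx : UniformlyComputableSeq x) (hdense : K ⊆ closure (range x)) :
    ∃ L, Computable L ∧ IsDyadicNet K L := by
  obtain ⟨g, hg, hgx⟩ := hx
  simp only [two_zpow_neg] at hgx
  have hpoint : Computable₂ fun n k : ℕ => g (k, n + 1) :=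
    hg.comp (Computable.pair Computable.snd (Computable.succ.comp Computable.fst))
  have hhalf (n : ℕ) : (1 / 2 ^ (n + 1) : ℝ) + 1 / 2 ^ (n + 1) = 1 / 2 ^ n := by
    rw [pow_succ]
    ring
  let b (n k : ℕ) : (ℚ × ℚ) × ℚ := (g (k, n + 1), 1 / 2 ^ n)
  have hb : Computable₂ b :=
    Computable.pair hpoint ((primrec_rat_div_two_pow 1).to_comp.comp Computable.fst)
  have hcover (n : ℕ) : K ⊆ ⋃ k, ratBall (b n k) := fun y hy => by
    obtain ⟨_, ⟨k, rfl⟩, hyk⟩ :=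
      Metric.mem_closure_iff.1 (hdense hy) (1 / 2 ^ (n + 1)) (by positivity)
    have hxg := hgx k (n + 1)
    refine mem_iUnion.2 ⟨k, mem_ratBall.2 ?_⟩
    simp only [b]
    push_cast
    linarith [dist_triangle_right y (ratPointToReal (g (k, n + 1))) (x k), hhalf n]
  obtain ⟨f, hf, hfK⟩ := exists_computable_finite_subcover hK hKc hb hcover
  refine ⟨fun n => (List.range (f n)).map fun k => g (k, n + 1),
    computable_list_map_range hf hpoint, fun n y hy => ?_, fun n q hq => ?_⟩
  · obtain ⟨k, hk, hyk⟩ := mem_iUnion₂.1 (hfK n hy)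
    exact ⟨_, List.mem_map_of_mem (List.mem_range.2 hk), by simpa [b, mem_ratBall] using hyk⟩
  · obtain ⟨k, -, rfl⟩ := List.mem_map.1 hq
    refine ⟨x k, hxK k, ?_⟩
    rw [dist_comm]
    exact (hgx k (n + 1)).trans (one_div_pow_lt_one_div_pow_of_lt one_lt_two n.lt_succ_self)

theorem IsDyadicNet.compl_eq_biUnion (h : IsDyadicNet K L) (hK : IsClosed K) :
    Kᶜ = ⋃ (z : (ℚ × ℚ) × ℕ) (_ : ¬∃ q ∈ L z.2, ratPointToReal q ∈ ratBall (z.1, 2 / 2 ^ z.2)),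
      ratBall (z.1, 1 / 2 ^ z.2) := by
  refine Subset.antisymm (fun x hx => ?_) (iUnion₂_subset fun ⟨c, n⟩ hc y hy hyK => hc ?_)
  · obtain ⟨ε, hε, hball⟩ := Metric.isOpen_iff.1 hK.isOpen_compl x hx
    obtain ⟨n, hn⟩ := exists_one_div_two_pow_lt (show 0 < ε / 4 by positivity)
    obtain ⟨c, hxc⟩ := denseRange_ratPointToReal.exists_dist_lt x
      (show (0 : ℝ) < 1 / 2 ^ n by positivity)
    refine mem_iUnion₂.2 ⟨(c, n), fun ⟨q, hq, hqc⟩ => ?_, by simpa [mem_ratBall] using hxc⟩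
    obtain ⟨y, hy, hyq⟩ := h.exists_mem_set n q hq
    refine hball (Metric.mem_ball.2 ?_) hy
    simp only [mem_ratBall, Rat.cast_div, Rat.cast_ofNat, Rat.cast_pow] at hqc
    have htwo : (2 / 2 ^ n : ℝ) = 2 * (1 / 2 ^ n) := by ring
    linarith [dist_triangle4_right y x (ratPointToReal q) (ratPointToReal c)]
  · obtain ⟨q, hq, hyq⟩ := h.exists_mem_list n y hyK
    refine ⟨q, hq, ?_⟩
    simp only [mem_ratBall, Rat.cast_div, Rat.cast_ofNat, Rat.cast_pow, Rat.cast_one] at hy ⊢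
    have htwo : (2 / 2 ^ n : ℝ) = 2 * (1 / 2 ^ n) := by ring
    linarith [dist_triangle_left (ratPointToReal q) (ratPointToReal c) y]

theorem IsDyadicNet.isLowerComputableOpen_compl (h : IsDyadicNet K L) (hL : Computable L)
    (hK : IsClosed K) : IsLowerComputableOpen Kᶜ := by
  have hball (r : ℚ) : Computable fun z : (ℚ × ℚ) × ℕ => (z.1, r / 2 ^ z.2) :=
    Computable.pair Computable.fst ((primrec_rat_div_two_pow r).to_comp.comp Computable.snd)
  rw [h.compl_eq_biUnion hK]
  exact isLowerComputableOpen_biUnion (computablePred_of_primrecRel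
    (PrimrecRel.exists_mem_list primrecRel_ratPointToReal_mem_ratBall)
    (hL.comp Computable.snd) (hball 2)).not (hball 1)

open Classical in
/-- The first point of the list `l` lying in the rational ball `b`; it is `(0, 0)` if there is
none. -/
noncomputable def firstInBall (l : List (ℚ × ℚ)) (b : (ℚ × ℚ) × ℚ) : ℚ × ℚ :=
  (l.filter fun q => ratPointToReal q ∈ ratBall b).headI

theorem primrec_firstInBall : Primrec₂ firstInBall := by
  classical
  exact Primrec.list_headI.comp₂ (PrimrecRel.listFilter primrecRel_ratPointToReal_mem_ratBall)

theorem list_headI_mem {α : Type*} [Inhabited α] {l : List α} (hl : l ≠ []) : l.headI ∈ l := by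
  cases l <;> simp_all

theorem firstInBall_mem {l : List (ℚ × ℚ)} {b : (ℚ × ℚ) × ℚ}
    (h : ∃ q ∈ l, ratPointToReal q ∈ ratBall b) :
    firstInBall l b ∈ l ∧ ratPointToReal (firstInBall l b) ∈ ratBall b := by
  classical
  obtain ⟨q, hq, hqb⟩ := h
  have hmem : q ∈ l.filter fun q => ratPointToReal q ∈ ratBall b :=
    List.mem_filter.2 ⟨hq, decide_eq_true hqb⟩
  simpa only [firstInBall, List.mem_filter, decide_eq_true_eq] using
    list_headI_mem (List.ne_nil_of_mem hmem)

/-- Starting from the `i`-th point of `L n` (the first one if there is no `i`-th), repeatedly pass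
from a point of `L (n + k)` to a point of `L (n + k + 1)` at distance less than `2 * 2⁻⁽ⁿ⁺ᵏ⁾`. For a
dyadic net of `K` such a point exists, and the path converges to a point of `K`. -/
noncomputable def netPath (L : ℕ → List (ℚ × ℚ)) (n i : ℕ) : ℕ → ℚ × ℚ
  | 0 => (L n)[i]?.getD (L n).headI
  | k + 1 => firstInBall (L (n + k + 1)) (netPath L n i k, 2 / 2 ^ (n + k))

theorem computable_netPath (hL : Computable L) :
    Computable fun x : (ℕ × ℕ) × ℕ => netPath L x.1.1 x.1.2 x.2 := by
  have hstart : Computable fun x : (ℕ × ℕ) × ℕ => (L x.1.1)[x.1.2]?.getD (L x.1.1).headI := by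
    have hLn : Computable fun x : (ℕ × ℕ) × ℕ => L x.1.1 :=
      hL.comp (Computable.fst.comp Computable.fst)
    exact Computable.option_getD
      (Computable.list_getElem?.comp hLn (Computable.snd.comp Computable.fst))
      (Primrec.list_headI.to_comp.comp hLn)
  have hlevel : Computable fun y : ((ℕ × ℕ) × ℕ) × ℕ × ℚ × ℚ => y.1.1.1 + y.2.1 :=
    Primrec.nat_add.to_comp.comp (Computable.fst.comp (Computable.fst.comp Computable.fst))
      (Computable.fst.comp Computable.snd)
  have hstep : Computable₂ fun (x : (ℕ × ℕ) × ℕ) (y : ℕ × ℚ × ℚ) =>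
      firstInBall (L (x.1.1 + y.1 + 1)) (y.2, 2 / 2 ^ (x.1.1 + y.1)) :=
    primrec_firstInBall.to_comp.comp (hL.comp (Computable.succ.comp hlevel))
      (Computable.pair (Computable.snd.comp Computable.snd)
        ((primrec_rat_div_two_pow 2).to_comp.comp hlevel))
  refine (Computable.nat_rec Computable.snd hstart hstep).of_eq fun ⟨⟨n, i⟩, k⟩ => ?_
  induction k with
  | zero => rfl
  | succ k ih => simp only [netPath, ← ih]

namespace IsDyadicNet

theorem exists_mem_succ (h : IsDyadicNet K L) {n : ℕ} {p : ℚ × ℚ} (hp : p ∈ L n) :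
    ∃ q ∈ L (n + 1), ratPointToReal q ∈ ratBall (p, 2 / 2 ^ n) := by
  obtain ⟨x, hx, hxp⟩ := h.exists_mem_set n p hp
  obtain ⟨q, hq, hxq⟩ := h.exists_mem_list (n + 1) x hx
  refine ⟨q, hq, mem_ratBall.2 ?_⟩
  have hlt : (1 / 2 ^ (n + 1) : ℝ) < 1 / 2 ^ n :=
    one_div_pow_lt_one_div_pow_of_lt one_lt_two n.lt_succ_self
  have htwo : (2 / 2 ^ n : ℝ) = 2 * (1 / 2 ^ n) := by ring
  push_cast
  linarith [dist_triangle_left (ratPointToReal q) (ratPointToReal p) x]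

theorem netPath_mem (h : IsDyadicNet K L) (hne : K.Nonempty) (n i k : ℕ) :
    netPath L n i k ∈ L (n + k) := by
  induction k with
  | zero =>
    obtain ⟨x, hx⟩ := hne
    obtain ⟨q, hq, -⟩ := h.exists_mem_list n x hx
    rw [netPath]
    cases hi : (L n)[i]? with
    | none => exact list_headI_mem (List.ne_nil_of_mem hq)
    | some p => exact List.mem_of_getElem? hi
  | succ k ih => exact (firstInBall_mem (h.exists_mem_succ ih)).1

theorem exists_dist_netPath_le (h : IsDyadicNet K L) (hK : IsClosed K) (hne : K.Nonempty)
    (n i : ℕ) : ∃ x ∈ K, ∀ k, dist (ratPointToReal (netPath L n i k)) x ≤ 4 / 2 ^ (n + k) := by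
  set u : ℕ → ℝ × ℝ := fun k => ratPointToReal (netPath L n i k)
  have hu (k : ℕ) : dist (u k) (u (k + 1)) ≤ 4 / 2 ^ n / 2 / 2 ^ k := by
    have hstep := (firstInBall_mem (h.exists_mem_succ (h.netPath_mem hne n i k))).2
    rw [mem_ratBall, dist_comm] at hstep
    refine hstep.le.trans_eq ?_
    push_cast
    rw [pow_add]
    ring
  obtain ⟨x, hx⟩ := cauchySeq_tendsto_of_complete (cauchySeq_of_le_geometric_two hu)
  have hdist (k : ℕ) : dist (u k) x ≤ 4 / 2 ^ (n + k) :=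
    (dist_le_of_le_geometric_two_of_tendsto hu hx k).trans_eq (by rw [pow_add, div_div])
  refine ⟨x, hK.closure_subset (Metric.mem_closure_iff.2 fun ε hε => ?_), hdist⟩
  obtain ⟨m, hm⟩ := exists_one_div_two_pow_lt (show 0 < ε / 5 by positivity)
  obtain ⟨y, hy, hyu⟩ := h.exists_mem_set (n + m) _ (h.netPath_mem hne n i m)
  refine ⟨y, hy, ?_⟩
  have hle : (1 / 2 ^ (n + m) : ℝ) ≤ 1 / 2 ^ m :=
    one_div_pow_le_one_div_pow_of_le one_le_two (Nat.le_add_left m n)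
  have hfour : (4 / 2 ^ (n + m) : ℝ) = 4 * (1 / 2 ^ (n + m)) := by ring
  linarith [dist_triangle_left x y (u m), hdist m, dist_comm y (u m)]

theorem exists_dense_seq (h : IsDyadicNet K L) (hL : Computable L) (hK : IsClosed K)
    (hne : K.Nonempty) :
    ∃ x : ℕ → ℝ × ℝ, (∀ a, x a ∈ K) ∧ UniformlyComputableSeq x ∧ K ⊆ closure (range x) := by
  choose x hxK hx using fun a : ℕ => h.exists_dist_netPath_le hK hne (a.unpair.1 + 3) a.unpair.2
  have hpow (n : ℕ) : (4 / 2 ^ (n + 3) : ℝ) = 1 / 2 * (1 / 2 ^ n) := by ring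
  have hindex : Computable fun y : ℕ × ℕ => ((y.1.unpair.1 + 3, y.1.unpair.2), y.2) := by
    have hunpair : Computable fun y : ℕ × ℕ => y.1.unpair := Computable.unpair.comp Computable.fst
    exact Computable.pair (Computable.pair
      (Primrec.nat_add.to_comp.comp (Computable.fst.comp hunpair) (Computable.const 3))
      (Computable.snd.comp hunpair)) Computable.snd
  refine ⟨x, hxK, ⟨_, (computable_netPath hL).comp hindex, fun a m => ?_⟩,
    fun y hy => Metric.mem_closure_range_iff.2 fun ε hε => ?_⟩
  · have hle : (1 / 2 ^ (a.unpair.1 + m) : ℝ) ≤ 1 / 2 ^ m :=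
      one_div_pow_le_one_div_pow_of_le one_le_two (Nat.le_add_left _ _)
    have hpos : (0 : ℝ) < 1 / 2 ^ m := by positivity
    have hxa := hx a m
    rw [add_right_comm, hpow] at hxa
    rw [two_zpow_neg]
    linarith
  · obtain ⟨n, hn⟩ := exists_one_div_two_pow_lt hε
    obtain ⟨q, hq, hyq⟩ := h.exists_mem_list (n + 3) y hy
    obtain ⟨i, hi⟩ := List.mem_iff_getElem?.1 hq
    refine ⟨Nat.pair n i, ?_⟩
    have hxq := hx (Nat.pair n i) 0
    simp only [Nat.unpair_pair, netPath, hi, Option.getD_some, add_zero, hpow] at hxq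
    have hfour : (1 / 2 ^ (n + 3) : ℝ) = 1 / 8 * (1 / 2 ^ n) := by ring
    linarith [dist_triangle y (ratPointToReal q) (x (Nat.pair n i))]

end IsDyadicNet

end Nets

/-- a nonempty compact `K ⊆ ℝ × ℝ` is computable iff it contains a
uniformly computable dense sequence of points and has lower-computable open
complement. -/
theorem computableCompact_iff_dense_seq_and_lowerComputable_complement
    (K : Set (ℝ × ℝ)) (hK : IsCompact K) (hne : K.Nonempty) :
    IsComputableCompactSet K ↔
      ((∃ x : ℕ → ℝ × ℝ, (∀ n, x n ∈ K) ∧ UniformlyComputableSeq x ∧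
          K ⊆ closure (Set.range x)) ∧
        IsLowerComputableOpen Kᶜ) := by
  constructor
  · intro h
    obtain ⟨L, hL, hnet⟩ := h.exists_isDyadicNet hK.isBounded hne
    exact ⟨hnet.exists_dense_seq hL hK.isClosed hne,
      hnet.isLowerComputableOpen_compl hL hK.isClosed⟩
  · rintro ⟨⟨x, hxK, hx, hdense⟩, hKc⟩
    obtain ⟨L, hL, hnet⟩ := exists_isDyadicNet_of_dense_seq hK.isBounded hKc hxK hx hdense
    exact hnet.isComputableCompactSet hL hne
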